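/- (One-step inequality for SPMD with inexact action-value estimates, pathwise form.) Let π_k be a policy with full support, δ : S×A → ℝ an arbitrary perturbation, 𝒬 = Q^{π_k} + δ, η_k > 0, and define π_{k+1}(·|s) = argmin_{p∈Δ_A} { η_k[⟨𝒬(s,·), p⟩ + h^p(s)] + D_{π_k}^p(s) } for each s. Then for every s ∈ S: V^{π_{k+1}}(s) − V^{π_k}(s) ≤ ⟨𝒬(s,·), π_{k+1}(·|s) − π_k(·|s)⟩ + h^{π_{k+1}}(s) − h^{π_k}(s) + (1/η_k) D_{π_k}^{π_{k+1}}(s) + η_k ‖δ‖_∞² / (2(1−γ)), where ‖δ‖_∞ = max_{s,a}|δ(s,a)|. -/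

import Mathlib

open Finset

noncomputable section

namespace RL

/-- The probability simplex on a finite set `A`. -/
def simplex (A : Type*) [Fintype A] : Set (A → ℝ) :=
  {p | (∀ a, 0 ≤ p a) ∧ ∑ a, p a = 1}

/-- A policy assigns to each state a distribution over actions. -/
def IsPolicy {S A : Type*} [Fintype A] (π : S → A → ℝ) : Prop :=
  ∀ s, π s ∈ simplex A

/-- `KL q p` is the Bregman (KL) divergence `D_q^p = ∑_a p a * log (p a / q a)`. -/
def KL {A : Type*} [Fintype A] (q p : A → ℝ) : ℝ :=
  ∑ a, p a * Real.log (p a / q a)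

/-- The state transition matrix `P^π` induced by policy `π`. -/
def Pmat {S A : Type*} [Fintype A] (P : S → A → S → ℝ) (π : S → A → ℝ) :
    Matrix S S ℝ :=
  Matrix.of fun s s' => ∑ a, π s a * P s a s'

/-- `V` satisfies the Bellman equation for policy `π`, cost `c`, regularizer `h`,
and discount factor `γ`. -/
def IsValue {S A : Type*} [Fintype S] [Fintype A] (P : S → A → S → ℝ)
    (c : S → A → ℝ) (h : S → (A → ℝ) → ℝ) (γ : ℝ) (π : S → A → ℝ)
    (V : S → ℝ) : Prop :=
  ∀ s, V s = (∑ a, π s a * c s a) + h s (π s)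
    + γ * ∑ s', (∑ a, π s a * P s a s') * V s'

/-- The action-value function `Q^π` determined by a state-value function `V`. -/
def Qfun {S A : Type*} [Fintype S] (P : S → A → S → ℝ) (c : S → A → ℝ)
    (h : S → (A → ℝ) → ℝ) (γ : ℝ) (π : S → A → ℝ) (V : S → ℝ) :
    S → A → ℝ :=
  fun s a => c s a + h s (π s) + γ * ∑ s', P s a s' * V s'

/-- The discounted state-visitation distribution `d_s^π(s')`. -/
def dvisit {S A : Type*} [Fintype S] [Fintype A] [DecidableEq S]
    (P : S → A → S → ℝ) (γ : ℝ) (π : S → A → ℝ) (s s' : S) : ℝ :=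
  (1 - γ) * ∑' t : ℕ, γ ^ t * ((Pmat P π) ^ t) s s'

/-- `next` minimizes `p ↦ η * (⟨G, p⟩ + hreg p) + KL base p` over the simplex. -/
def IsProxStep {A : Type*} [Fintype A] (G : A → ℝ) (hreg : (A → ℝ) → ℝ)
    (η : ℝ) (base next : A → ℝ) : Prop :=
  next ∈ simplex A ∧ ∀ p ∈ simplex A,
    η * ((∑ a, G a * next a) + hreg next) + KL base next ≤
      η * ((∑ a, G a * p a) + hreg p) + KL base p

/-- `h` is convex with modulus `μ` relative to KL, with subgradients `h'`. -/
def ConvexReg {S A : Type*} [Fintype A] (h : S → (A → ℝ) → ℝ)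
    (h' : S → (A → ℝ) → A → ℝ) (μ : ℝ) : Prop :=
  ∀ s : S, ∀ p ∈ simplex A, ∀ q ∈ simplex A,
    μ * KL q p ≤ h s p - (h s q + ∑ a, h' s q a * (p a - q a))

/-!
By the performance difference identity, `W = V^{π_{k+1}} - V^{π_k}` solves
`W = ⟨Q^{π_k}, π_{k+1} - π_k⟩ + h^{π_{k+1}} - h^{π_k} + γ P^{π_{k+1}} W`. Replacing `Q^{π_k}` by its
estimate costs `-⟨δ, π_{k+1} - π_k⟩`, which by the Gibbs variational principle and Hoeffding's lemma
is at most `D / η + η ‖δ‖² / 2`. Hence `W ≤ g + η ‖δ‖² / 2 + γ P^{π_{k+1}} W`, where `g` is the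
increment of the proximal objective. Comparing the prox step with `π_k` gives `g ≤ 0`, so a maximum
principle bounds `W` by `η ‖δ‖² / (2 (1 - γ))`, and inserting this bound on the right-hand side
gives the inequality.
-/

section KLDivergence

variable {A : Type*} [Fintype A] {p q x δ : A → ℝ}

lemma KL_self (q : A → ℝ) : KL q q = 0 := by
  refine sum_eq_zero fun a _ => ?_
  rcases eq_or_ne (q a) 0 with hq | hq
  · rw [hq, zero_mul]
  · rw [div_self hq, Real.log_one, mul_zero]

lemma mul_add_sub_mul_exp_le_mul_log_div {p q : ℝ} (hp : 0 ≤ p) (hq : 0 ≤ q)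
    (hpq : q = 0 → p = 0) (y : ℝ) :
    p * y + p - q * Real.exp y ≤ p * Real.log (p / q) := by
  rcases hp.eq_or_lt with rfl | hp
  · simpa using mul_nonneg hq (Real.exp_pos y).le
  have hq : 0 < q := hq.lt_of_ne' (mt hpq hp.ne')
  have hlog : Real.log (q * Real.exp y / p) = y - Real.log (p / q) := by
    rw [Real.log_div (by positivity) hp.ne', Real.log_mul hq.ne' (Real.exp_ne_zero y),
      Real.log_exp, Real.log_div hp.ne' hq.ne']
    ring
  have htangent : y - Real.log (p / q) ≤ q * Real.exp y / p - 1 :=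
    hlog ▸ Real.log_le_sub_one_of_pos (by positivity)
  calc p * y + p - q * Real.exp y
      = p * Real.log (p / q)
          + p * ((y - Real.log (p / q)) - (q * Real.exp y / p - 1)) := by
        field_simp
        ring
    _ ≤ p * Real.log (p / q) :=
        add_le_of_nonpos_right (mul_nonpos_of_nonneg_of_nonpos hp.le (sub_nonpos.2 htangent))

/-- The Gibbs (Donsker–Varadhan) variational principle, with the log-partition function replaced
by an upper bound `L`. -/
lemma sum_mul_sub_le_KL (hp : p ∈ simplex A) (hq : ∀ a, 0 ≤ q a) (hpq : ∀ a, q a = 0 → p a = 0)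
    {L : ℝ} (hL : ∑ a, q a * Real.exp (x a) ≤ Real.exp L) :
    ∑ a, p a * x a - L ≤ KL q p := by
  have hpartition : ∑ a, q a * Real.exp (x a - L) ≤ 1 := by
    simp_rw [Real.exp_sub, ← mul_div_assoc, ← sum_div]
    exact div_le_one_of_le₀ hL (Real.exp_pos L).le
  calc ∑ a, p a * x a - L
      ≤ ∑ a, p a * x a - L + (1 - ∑ a, q a * Real.exp (x a - L)) :=
        le_add_of_nonneg_right (sub_nonneg.2 hpartition)
    _ = ∑ a, (p a * (x a - L) + p a - q a * Real.exp (x a - L)) := by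
        simp only [mul_sub, sum_sub_distrib, sum_add_distrib, ← sum_mul, hp.2]
        ring
    _ ≤ KL q p := sum_le_sum fun a _ =>
        mul_add_sub_mul_exp_le_mul_log_div (hp.1 a) (hq a) (hpq a) _

lemma sum_mul_exp_le_exp_of_mem_Icc (hq : q ∈ simplex A) {l u : ℝ}
    (hx : ∀ a, x a ∈ Set.Icc l u) :
    ∑ a, q a * Real.exp (x a) ≤ Real.exp (∑ a, q a * x a + (u - l) ^ 2 / 8) := by
  let _ : MeasurableSpace A := ⊤
  have hmass : ∑ a, ENNReal.ofReal (q a) = 1 := by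
    rw [← ENNReal.ofReal_sum_of_nonneg fun a _ => hq.1 a, hq.2, ENNReal.ofReal_one]
  let ν := (PMF.ofFintype (fun a => ENNReal.ofReal (q a)) hmass).toMeasure
  have hintegral (f : A → ℝ) : ∫ a, f a ∂ν = ∑ a, q a * f a := by
    simp [ν, PMF.integral_eq_sum, ENNReal.toReal_ofReal (hq.1 _)]
  have hmgf := (ProbabilityTheory.hasSubgaussianMGF_of_mem_Icc (μ := ν)
    (measurable_of_finite x).aemeasurable (.of_forall hx)).mgf_le 1
  simp only [ProbabilityTheory.mgf, hintegral, one_mul, Real.exp_sub, ← mul_div_assoc,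
    ← sum_div] at hmgf
  rw [div_le_iff₀ (Real.exp_pos _), ← Real.exp_add] at hmgf
  refine hmgf.trans_eq (congrArg Real.exp ?_)
  push_cast
  rw [div_pow, Real.norm_eq_abs, sq_abs]
  ring

lemma neg_sum_mul_sub_le_KL_add_sq (hp : p ∈ simplex A) (hq : q ∈ simplex A)
    (hpq : ∀ a, q a = 0 → p a = 0) {M η : ℝ} (hη : 0 < η) (hδ : ∀ a, |δ a| ≤ M) :
    -∑ a, δ a * (p a - q a) ≤ (1 / η) * KL q p + η * M ^ 2 / 2 := by
  have hx (a : A) : -(η * δ a) ∈ Set.Icc (-(η * M)) (η * M) := by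
    rw [Set.mem_Icc, ← abs_le, abs_neg, abs_mul, abs_of_pos hη]
    exact mul_le_mul_of_nonneg_left (hδ a) hη.le
  have hgibbs := sum_mul_sub_le_KL hp hq.1 hpq (sum_mul_exp_le_exp_of_mem_Icc hq hx)
  have hscale : ∑ a, p a * -(η * δ a) - ∑ a, q a * -(η * δ a)
      = η * -∑ a, δ a * (p a - q a) := by
    rw [← sum_sub_distrib, ← sum_neg_distrib, mul_sum]
    exact sum_congr rfl fun a _ => by ring
  rw [← sub_sub, hscale] at hgibbs
  refine le_of_mul_le_mul_left ?_ hη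
  calc η * -∑ a, δ a * (p a - q a) ≤ KL q p + (η * M - -(η * M)) ^ 2 / 8 := by linarith
    _ = η * ((1 / η) * KL q p + η * M ^ 2 / 2) := by field_simp; ring

end KLDivergence

section ProxStep

variable {A : Type*} [Fintype A] {G : A → ℝ} {hreg : (A → ℝ) → ℝ} {η : ℝ} {base next : A → ℝ}

/-- The increment, from `base` to `next`, of the objective minimized by a prox step, divided
by `η`. The term `KL base base = 0` is left out. -/
def proxIncrement (G : A → ℝ) (hreg : (A → ℝ) → ℝ) (η : ℝ) (base next : A → ℝ) : ℝ :=
  (∑ a, G a * (next a - base a)) + (hreg next - hreg base) + (1 / η) * KL base next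

lemma IsProxStep.proxIncrement_nonpos (hη : 0 < η) (hbase : base ∈ simplex A)
    (hnext : IsProxStep G hreg η base next) : proxIncrement G hreg η base next ≤ 0 := by
  have hmin := hnext.2 base hbase
  rw [KL_self] at hmin
  refine nonpos_of_mul_nonpos_right ?_ hη
  calc η * proxIncrement G hreg η base next
      = (η * (∑ a, G a * next a + hreg next) + KL base next)
          - (η * (∑ a, G a * base a + hreg base) + 0) := by
        simp only [proxIncrement, mul_sub, sum_sub_distrib]
        field_simp
        ring
    _ ≤ 0 := sub_nonpos.2 hmin

end ProxStep

section RowStochastic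

open Matrix

variable {S : Type*} [Fintype S] [DecidableEq S] {K : Matrix S S ℝ} {W g : S → ℝ}

lemma mulVec_le_of_mem_rowStochastic (hK : K ∈ rowStochastic ℝ S) {m : ℝ}
    (hW : ∀ s, W s ≤ m) (s : S) : (K *ᵥ W) s ≤ m :=
  calc ∑ s', K s s' * W s' ≤ ∑ s', K s s' * m :=
        sum_le_sum fun s' _ => mul_le_mul_of_nonneg_left (hW s') (hK.1 s s')
    _ = m := by rw [← sum_mul, sum_row_of_mem_rowStochastic hK, one_mul]

/-- Maximum principle: at a maximizer `s` of `W` the hypothesis gives `W s ≤ e + γ * W s`. -/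
lemma le_div_one_sub_of_le_add_mulVec (hK : K ∈ rowStochastic ℝ S) {γ e : ℝ} (hγ0 : 0 ≤ γ)
    (hγ1 : γ < 1) (hW : ∀ s, W s ≤ e + γ * (K *ᵥ W) s) (s : S) : W s ≤ e / (1 - γ) := by
  have : Nonempty S := ⟨s⟩
  obtain ⟨m, hm⟩ := Finite.exists_max W
  have hmax : W m ≤ e + γ * W m := (hW m).trans <| by
    gcongr
    exact mulVec_le_of_mem_rowStochastic hK hm m
  refine (hm s).trans ?_
  rw [le_div_iff₀ (sub_pos.2 hγ1)]
  linarith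

lemma le_add_div_one_sub_of_le_add_mulVec (hK : K ∈ rowStochastic ℝ S) {γ e : ℝ} (hγ0 : 0 ≤ γ)
    (hγ1 : γ < 1) (hg : ∀ s, g s ≤ 0) (hW : ∀ s, W s ≤ g s + e + γ * (K *ᵥ W) s) (s : S) :
    W s ≤ g s + e / (1 - γ) := by
  have hbound : ∀ s, W s ≤ e / (1 - γ) :=
    le_div_one_sub_of_le_add_mulVec hK hγ0 hγ1 fun s => by linarith [hW s, hg s]
  calc W s ≤ g s + e + γ * (K *ᵥ W) s := hW s
    _ ≤ g s + e + γ * (e / (1 - γ)) := by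
        gcongr
        exact mulVec_le_of_mem_rowStochastic hK hbound s
    _ = g s + e / (1 - γ) := by
        field_simp [(sub_pos.2 hγ1).ne']
        ring

end RowStochastic

section MarkovDecisionProcess

open Matrix

variable {S A : Type*} [Fintype S] [Fintype A] {P : S → A → S → ℝ} {c : S → A → ℝ}
  {h : S → (A → ℝ) → ℝ} {γ : ℝ} {π π' : S → A → ℝ} {V V' : S → ℝ}

lemma IsPolicy.Pmat_mem_rowStochastic [DecidableEq S] (hπ : IsPolicy π)
    (hP0 : ∀ s a s', 0 ≤ P s a s') (hP1 : ∀ s a, ∑ s', P s a s' = 1) :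
    Pmat P π ∈ rowStochastic ℝ S := by
  refine mem_rowStochastic_iff_sum.2 ⟨fun s s' => ?_, fun s => ?_⟩
  · exact sum_nonneg fun a _ => mul_nonneg ((hπ s).1 a) (hP0 s a s')
  · simp only [Pmat, of_apply]
    rw [sum_comm]
    simp only [← mul_sum, hP1, mul_one, (hπ s).2]

lemma Pmat_mulVec_apply (P : S → A → S → ℝ) (π : S → A → ℝ) (V : S → ℝ) (s : S) :
    (Pmat P π *ᵥ V) s = ∑ a, π s a * ∑ s', P s a s' * V s' := by
  simp only [mulVec, dotProduct, Pmat, of_apply, sum_mul, mul_sum, mul_assoc]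
  exact sum_comm

lemma IsPolicy.sum_Qfun_mul (hπ' : IsPolicy π') (π : S → A → ℝ) (V : S → ℝ) (s : S) :
    ∑ a, Qfun P c h γ π V s a * π' s a
      = ∑ a, π' s a * c s a + h s (π s) + γ * (Pmat P π' *ᵥ V) s := by
  have hconst : ∑ a, π' s a * h s (π s) = h s (π s) := by rw [← sum_mul, (hπ' s).2, one_mul]
  rw [Pmat_mulVec_apply, ← hconst, mul_sum, ← sum_add_distrib, ← sum_add_distrib]
  exact sum_congr rfl fun a _ => by unfold Qfun; ring

lemma IsValue.sub_eq_sum_Qfun_mul_sub_add (hπ : IsPolicy π) (hπ' : IsPolicy π')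
    (hV : IsValue P c h γ π V) (hV' : IsValue P c h γ π' V') (s : S) :
    V' s - V s = ∑ a, Qfun P c h γ π V s a * (π' s a - π s a) + (h s (π' s) - h s (π s))
      + γ * (Pmat P π' *ᵥ (V' - V)) s := by
  have hbellman : V s = ∑ a, π s a * c s a + h s (π s) + γ * (Pmat P π *ᵥ V) s := hV s
  have hbellman' : V' s = ∑ a, π' s a * c s a + h s (π' s) + γ * (Pmat P π' *ᵥ V') s := hV' s
  simp only [mul_sub, sum_sub_distrib, hπ.sum_Qfun_mul, hπ'.sum_Qfun_mul, mulVec_sub,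
    Pi.sub_apply]
  linarith

theorem spmd_one_step_general (hP0 : ∀ s a s', 0 ≤ P s a s') (hP1 : ∀ s a, ∑ s', P s a s' = 1)
    (hγ0 : 0 ≤ γ) (hγ1 : γ < 1) (hπ : IsPolicy π) (hπ' : IsPolicy π')
    (hsupp : ∀ s a, π s a = 0 → π' s a = 0)
    (hV : IsValue P c h γ π V) (hV' : IsValue P c h γ π' V')
    {δ : S → A → ℝ} {M η : ℝ} (hδ : ∀ s a, |δ s a| ≤ M) (hη : 0 < η)
    (hdescent : ∀ s,
      proxIncrement (fun a => Qfun P c h γ π V s a + δ s a) (h s) η (π s) (π' s) ≤ 0) (s : S) :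
    V' s - V s ≤ proxIncrement (fun a => Qfun P c h γ π V s a + δ s a) (h s) η (π s) (π' s)
      + η * M ^ 2 / (2 * (1 - γ)) := by
  classical
  rw [← div_div]
  refine le_add_div_one_sub_of_le_add_mulVec (W := V' - V)
    (hπ'.Pmat_mem_rowStochastic hP0 hP1) hγ0 hγ1 hdescent (fun s => ?_) s
  have hdiff := IsValue.sub_eq_sum_Qfun_mul_sub_add hπ hπ' hV hV' s
  have herror := neg_sum_mul_sub_le_KL_add_sq (hπ' s) (hπ s) (hsupp s) hη (hδ s)
  simp only [proxIncrement, add_mul, sum_add_distrib, Pi.sub_apply]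
  linarith

end MarkovDecisionProcess

/-- one-step inequality for SPMD with inexact action-value
estimates, pathwise form: with `𝒬 = Q^{π_k} + δ` and
`π_{k+1}(·|s) = argmin_{p∈Δ_A} { η_k [⟨𝒬(s,·), p⟩ + h^p(s)] + D_{π_k}^p(s) }`,
for every `s`:
`V^{π_{k+1}}(s) - V^{π_k}(s) ≤ ⟨𝒬(s,·), π_{k+1}(·|s) - π_k(·|s)⟩
  + h^{π_{k+1}}(s) - h^{π_k}(s) + (1/η_k) D_{π_k}^{π_{k+1}}(s)
  + η_k ‖δ‖_∞² / (2(1-γ))`. -/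
theorem spmd_one_step {S A : Type*} [Fintype S] [Fintype A]
    [Nonempty S] [Nonempty A]
    (P : S → A → S → ℝ) (hP0 : ∀ s a s', 0 ≤ P s a s')
    (hP1 : ∀ s a, ∑ s', P s a s' = 1)
    (c : S → A → ℝ) (γ : ℝ) (hγ0 : 0 < γ) (hγ1 : γ < 1)
    (h : S → (A → ℝ) → ℝ) (h' : S → (A → ℝ) → A → ℝ)
    (hconv : ConvexReg h h' 0)
    (πk : S → A → ℝ) (hπk : IsPolicy πk) (hπkpos : ∀ s a, 0 < πk s a)
    (δ : S → A → ℝ) (ηk : ℝ) (hηk : 0 < ηk)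
    (πk1 : S → A → ℝ)
    (Vk Vk1 : S → ℝ)
    (hVk : IsValue P c h γ πk Vk) (hVk1 : IsValue P c h γ πk1 Vk1)
    (hstep : ∀ s, IsProxStep (fun a => Qfun P c h γ πk Vk s a + δ s a) (h s)
      ηk (πk s) (πk1 s)) :
    ∀ s, Vk1 s - Vk s ≤
      (∑ a, (Qfun P c h γ πk Vk s a + δ s a) * (πk1 s a - πk s a))
        + (h s (πk1 s) - h s (πk s))
        + (1 / ηk) * KL (πk s) (πk1 s)
        + ηk * (⨆ q : S × A, |δ q.1 q.2|) ^ 2 / (2 * (1 - γ)) := by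
  exact spmd_one_step_general hP0 hP1 hγ0.le hγ1 hπk (fun s => (hstep s).1)
    (fun s a hzero => absurd hzero (hπkpos s a).ne') hVk hVk1
    (fun s a => le_ciSup (f := fun q : S × A => |δ q.1 q.2|) (Set.finite_range _).bddAbove (s, a))
    hηk fun s => (hstep s).proxIncrement_nonpos hηk (hπk s)

end RL
end
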